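/- Let N ∈ ℕ, N ≥ 1, let r = (r₁,r₂) ∈ (1/N)ℤ², and let A = [[a,b],[c,d]] ∈ Γ_r. Then χ_r(A) = −(−1)^{δ₂(Ar−r)} · e((1/2)(r₂(a r₁ + b r₂) − r₁(c r₁ + d r₂))), where δ₂(q) := 1 if q ∈ 2ℤ² and δ₂(q) := 0 otherwise. Moreover χ_r(A) is an N′-th root of unity, where N′ = N if N is odd and N′ = 2N if N is even. -/

import Mathlib

/-!
Put `(m, n) = Ar - r ∈ ℤ²` and let `(x, y) = A⁻¹(m, n) = (d m - b n, a n - c m) ∈ ℤ²`.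
Since `ad - bc = 1`, one has `x = (1 - d) r₁ + b r₂` and `y = c r₁ - (a - 1) r₂`, and the exponent of
`χ_r(A)` is exactly `(K + F) / 2`, where `K = x + y + x y` is an integer and
`F = r₂ (a r₁ + b r₂) - r₁ (c r₁ + d r₂) = r₂ m - r₁ n` (`chi_eq_ee`). Now `K = (x + 1)(y + 1) - 1`
is even exactly when `x` and `y` are both even, equivalently (as `A` is invertible mod 2) when
`m` and `n` are both even; this gives the sign `-(-1)^δ₂`.

For the order, write `r = (p, q) / N`. Then `N F = q m - p n` is an integer, so the `2N`-th power
is `e(N K + N F) = 1`. For odd `N`, reducing `N m = (a - 1) p + b q` and `N n = c p + (d - 1) q`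
mod 2 and using `ad - bc = 1` shows that `N K + N F` is even (`kf_zmod_two`), so already the
`N`-th power is `1`.
-/

open Complex

/-- `e(z) = exp(2πiz)`. -/
noncomputable def ee (z : ℂ) : ℂ := Complex.exp (2 * Real.pi * Complex.I * z)

/-- Membership of `[[a,b],[c,d]]` in the congruence group `Γ_r`. -/
def inGamma (r : ℚ × ℚ) (a b c d : ℤ) : Prop :=
  a * d - b * c = 1 ∧ (∃ m : ℤ, (a : ℚ) * r.1 + (b : ℚ) * r.2 - r.1 = m)
    ∧ (∃ n : ℤ, (c : ℚ) * r.1 + (d : ℚ) * r.2 - r.2 = n)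

/-- The character `χ_r(A)` on `Γ_r`. -/
noncomputable def chi (r : ℚ × ℚ) (a b c d : ℤ) : ℂ :=
  ee ((1/2) * (((c : ℂ) - (d : ℂ) + 1) * (r.1 : ℂ) + (-(a : ℂ) + (b : ℂ) + 1) * (r.2 : ℂ)
    - (c : ℂ) * (d : ℂ) * (r.1 : ℂ)^2
    + 2 * ((a : ℂ) - 1) * (d : ℂ) * (r.1 : ℂ) * (r.2 : ℂ)
    - ((a : ℂ) - 2) * (b : ℂ) * (r.2 : ℂ)^2))

open Classical in
/-- `δ₂(q) = 1` if `q ∈ 2ℤ²`, and `0` otherwise. -/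
noncomputable def delta2 (q : ℚ × ℚ) : ℕ :=
  if (∃ m : ℤ, q.1 = 2 * m) ∧ (∃ n : ℤ, q.2 = 2 * n) then 1 else 0

theorem ee_add (z w : ℂ) : ee (z + w) = ee z * ee w := by
  simp only [ee, mul_add, Complex.exp_add]

theorem ee_int (k : ℤ) : ee k = 1 := by
  rw [ee, Complex.exp_eq_one_iff]
  exact ⟨k, by ring⟩

theorem ee_pow (z : ℂ) (n : ℕ) : ee z ^ n = ee (n * z) := by
  rw [ee, ee, ← Complex.exp_nat_mul]
  congr 1
  ring

theorem ee_half_even {k : ℤ} (hk : Even k) : ee ((1/2) * (k : ℂ)) = 1 := by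
  obtain ⟨j, rfl⟩ := hk
  refine Eq.trans ?_ (ee_int j)
  congr 1
  push_cast
  ring

theorem ee_half_odd {k : ℤ} (hk : Odd k) : ee ((1/2) * (k : ℂ)) = -1 := by
  obtain ⟨j, rfl⟩ := hk
  have h : (1/2) * ((2 * j + 1 : ℤ) : ℂ) = (j : ℂ) + 1/2 := by
    push_cast
    ring
  rw [h, ee_add, ee_int, one_mul, ee, ← Complex.exp_pi_mul_I]
  congr 1
  ring

/-- The integer part `K = x + y + x y` of twice the exponent of `χ_r(A)`, where
`(x, y) = A⁻¹(m, n)`. -/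
def kInt (a b c d m n : ℤ) : ℤ :=
  (d * m - b * n) + (a * n - c * m) + (d * m - b * n) * (a * n - c * m)

/-- The exponent of `χ_r(A)` splits as half the integer `K` plus half of `F`. -/
theorem chi_eq_ee (r : ℚ × ℚ) (a b c d m n : ℤ) (hdet : a * d - b * c = 1)
    (hm : (a : ℚ) * r.1 + (b : ℚ) * r.2 - r.1 = m)
    (hn : (c : ℚ) * r.1 + (d : ℚ) * r.2 - r.2 = n) :
    chi r a b c d = ee ((1/2) * (kInt a b c d m n : ℂ)
      + (1/2) * ((r.2 : ℂ) * ((a : ℂ) * (r.1 : ℂ) + (b : ℂ) * (r.2 : ℂ))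
            - (r.1 : ℂ) * ((c : ℂ) * (r.1 : ℂ) + (d : ℂ) * (r.2 : ℂ)))) := by
  have hdet' : (a : ℂ) * d - b * c = 1 := by exact_mod_cast hdet
  have hm' : (a : ℂ) * r.1 + b * r.2 - r.1 = m := by exact_mod_cast congrArg (Rat.cast (K := ℂ)) hm
  have hn' : (c : ℂ) * r.1 + d * r.2 - r.2 = n := by exact_mod_cast congrArg (Rat.cast (K := ℂ)) hn
  have hx : (d : ℂ) * m - b * n = (1 - d) * r.1 + b * r.2 := by
    rw [← hm', ← hn']
    linear_combination (r.1 : ℂ) * hdet'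
  have hy : (a : ℂ) * n - c * m = c * r.1 - (a - 1) * r.2 := by
    rw [← hm', ← hn']
    linear_combination (r.2 : ℂ) * hdet'
  rw [chi, kInt]
  congr 1
  push_cast
  rw [hx, hy]
  linear_combination (1/2) * (r.1 : ℂ) * r.2 * hdet'

/-- `K = (x + 1)(y + 1) - 1` is even iff `x` and `y` are, and `(x, y) = A⁻¹(m, n)` vanishes mod 2
iff `(m, n)` does. -/
theorem kInt_even_iff (a b c d m n : ℤ) (hdet : a * d - b * c = 1) :
    Even (kInt a b c d m n) ↔ Even m ∧ Even n := by
  have key : ∀ a b c d m n : ZMod 2, a * d - b * c = 1 →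
      ((d * m - b * n) + (a * n - c * m) + (d * m - b * n) * (a * n - c * m) = 0
        ↔ m = 0 ∧ n = 0) := by decide
  have h := key a b c d m n (by exact_mod_cast congrArg (Int.cast (R := ZMod 2)) hdet)
  simp only [← ZMod.intCast_eq_zero_iff_even]
  rw [← h, kInt]
  push_cast
  rfl

/-- The mod 2 computation behind the case of odd `N`: the relations for `m` and
`n` are `N (m, n) = (A - 1)(p, q)` reduced mod 2, with `N` odd. -/
theorem kf_zmod_two : ∀ a b c d p q m n : ZMod 2, a * d - b * c = 1 →
    m = a * p + b * q - p → n = c * p + d * q - q →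
    (d * m - b * n) + (a * n - c * m) + (d * m - b * n) * (a * n - c * m)
      + (q * m - p * n) = 0 := by
  intro a b c d p q m n h hm hn
  subst hm hn
  revert a b c d p q
  decide

/-- Simplified formula for `χ_r(A)` when `r ∈ (1/N)ℤ²` and `A ∈ Γ_r`, together with
the fact that `χ_r(A)` is an `N′`-th root of unity, where `N′ = N` for odd `N` and
`N′ = 2N` for even `N`. -/
theorem chi_formula_and_root_of_unity (N : ℕ) (hN : 1 ≤ N) (r : ℚ × ℚ)
    (hr : ∃ p q : ℤ, r.1 = (p : ℚ) / (N : ℚ) ∧ r.2 = (q : ℚ) / (N : ℚ))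
    (a b c d : ℤ) (hA : inGamma r a b c d) :
    chi r a b c d
      = -(-1 : ℂ) ^ (delta2 ((a : ℚ) * r.1 + (b : ℚ) * r.2 - r.1,
            (c : ℚ) * r.1 + (d : ℚ) * r.2 - r.2))
        * ee ((1/2) * ((r.2 : ℂ) * ((a : ℂ) * (r.1 : ℂ) + (b : ℂ) * (r.2 : ℂ))
            - (r.1 : ℂ) * ((c : ℂ) * (r.1 : ℂ) + (d : ℂ) * (r.2 : ℂ))))
    ∧ chi r a b c d ^ (if N % 2 = 1 then N else 2 * N) = 1 := by
  obtain ⟨hdet, ⟨m, hm⟩, ⟨n, hn⟩⟩ := hA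
  obtain ⟨p, q, hp, hq⟩ := hr
  have hchi := chi_eq_ee r a b c d m n hdet hm hn
  have hN0 : (N : ℚ) ≠ 0 := by exact_mod_cast (by omega : N ≠ 0)
  constructor
  · rw [hchi, ee_add]
    congr 1
    have hiff : ((∃ k : ℤ, (m : ℚ) = 2 * k) ∧ (∃ k : ℤ, (n : ℚ) = 2 * k))
        ↔ Even (kInt a b c d m n) := by
      rw [kInt_even_iff a b c d m n hdet, even_iff_two_dvd, even_iff_two_dvd]
      exact and_congr (exists_congr fun k => by norm_cast) (exists_congr fun k => by norm_cast)
    rw [hm, hn, delta2]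
    by_cases hK : Even (kInt a b c d m n)
    · rw [if_pos (hiff.2 hK), ee_half_even hK]
      norm_num
    · rw [if_neg (mt hiff.1 hK), ee_half_odd (Int.not_even_iff_odd.1 hK)]
      norm_num
  · have hp' : (N : ℚ) * r.1 = p := by rw [hp]; field_simp
    have hq' : (N : ℚ) * r.2 = q := by rw [hq]; field_simp
    have hNm : (N : ℤ) * m = a * p + b * q - p := by
      have : (N : ℚ) * m = a * p + b * q - p := by
        rw [← hm, ← hp', ← hq']; ring
      exact_mod_cast this
    have hNn : (N : ℤ) * n = c * p + d * q - q := by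
      have : (N : ℚ) * n = c * p + d * q - q := by
        rw [← hn, ← hp', ← hq']; ring
      exact_mod_cast this
    have hF : (N : ℂ) * ((r.2 : ℂ) * ((a : ℂ) * (r.1 : ℂ) + (b : ℂ) * (r.2 : ℂ))
            - (r.1 : ℂ) * ((c : ℂ) * (r.1 : ℂ) + (d : ℂ) * (r.2 : ℂ)))
          = ((q * m - p * n : ℤ) : ℂ) := by
      have : (N : ℚ) * (r.2 * (a * r.1 + b * r.2) - r.1 * (c * r.1 + d * r.2))
          = ((q * m - p * n : ℤ) : ℚ) := by
        push_cast
        rw [← hm, ← hn, ← hp', ← hq']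
        ring
      exact_mod_cast congrArg (Rat.cast (K := ℂ)) this
    have hpow : chi r a b c d ^ N
        = ee ((1/2) * ((N * kInt a b c d m n + (q * m - p * n) : ℤ) : ℂ)) := by
      rw [hchi, ee_pow, Int.cast_add, ← hF]
      congr 1
      push_cast
      ring
    split_ifs with hodd
    · rw [hpow]
      apply ee_half_even
      have hN2 : (N : ZMod 2) = 1 := (ZMod.natCast_eq_one_iff_odd).2 (Nat.odd_iff.2 hodd)
      have hm2 := congrArg (Int.cast (R := ZMod 2)) hNm
      have hn2 := congrArg (Int.cast (R := ZMod 2)) hNn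
      push_cast at hm2 hn2
      rw [hN2, one_mul] at hm2 hn2
      rw [← ZMod.intCast_eq_zero_iff_even, kInt]
      push_cast
      rw [hN2, one_mul]
      exact kf_zmod_two a b c d p q m n
        (by exact_mod_cast congrArg (Int.cast (R := ZMod 2)) hdet) hm2 hn2
    · rw [mul_comm, pow_mul, hpow, ee_pow]
      refine Eq.trans ?_ (ee_int (N * kInt a b c d m n + (q * m - p * n)))
      congr 1
      push_cast
      ring
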